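/- FL¹ bound on Picard iterates: let k ≥ 2 be an integer. There exists a constant C > 0, depending only on k, such that for all v₀, v₁ ∈ L¹(ℝ), every j ∈ ℕ and every T with 0 < T ≤ 1, the Picard iterate satisfies ‖Ξ̂_j(v₀,v₁)(T)‖_{L¹(ℝ)} ≤ C^j · T^{2j} · (‖v₀‖_{L¹(ℝ)} + ‖v₁‖_{L¹(ℝ)})^{(k−1)j + 1}. -/

import Mathlib

open MeasureTheory Filter
open scoped ENNReal

noncomputable section

/-- The Japanese bracket weight `⟨ξ⟩^s = (1+ξ²)^(s/2)`. -/
def jbw (s ξ : ℝ) : ℝ := (1 + ξ ^ 2) ^ (s / 2)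

/-- `λ(ξ) = |ξ|/⟨ξ⟩`. -/
def lam (ξ : ℝ) : ℝ := |ξ| / (1 + ξ ^ 2) ^ ((1 : ℝ) / 2)

/-- The multiplier `m(t,ξ) = sin(tλ(ξ))/λ(ξ)` for `ξ ≠ 0`, `m(t,0) = t`. -/
def mker (t ξ : ℝ) : ℝ := if ξ = 0 then t else Real.sin (t * lam ξ) / lam ξ

/-- Fourier side linear propagator `Ŝ(t)(v₀,v₁)`. -/
def Shat (t : ℝ) (v₀ v₁ : ℝ → ℂ) (ξ : ℝ) : ℂ :=
  (Real.cos (t * lam ξ) : ℂ) * v₀ ξ + (mker t ξ : ℂ) * v₁ ξ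

/-- Convolution of complex valued functions on `ℝ`. -/
def conv (f g : ℝ → ℂ) (ξ : ℝ) : ℂ := ∫ η, f η * g (ξ - η)

/-- Iterated convolution of a list of functions. -/
def convList : List (ℝ → ℂ) → ℝ → ℂ
  | [] => fun _ => 0
  | [f] => f
  | f :: g :: fs => conv f (convList (g :: fs))

/-- Fourier side Duhamel operator `Î_k`. -/
def Ihat (k : ℕ) (w : Fin k → ℝ → ℝ → ℂ) (t ξ : ℝ) : ℂ :=
  ∫ t' in (0:ℝ)..t,
    ((Real.sin ((t - t') * lam ξ) * lam ξ : ℝ) : ℂ) * convList (List.ofFn fun i => w i t') ξ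

/-- Continuity of a curve of functions with respect to the `L¹` norm, on `[0,T]`. -/
def ContinuousL1On (T : ℝ) (v : ℝ → ℝ → ℂ) : Prop :=
  ∀ t₀ ∈ Set.Icc (0 : ℝ) T,
    Tendsto (fun t => eLpNorm (fun ξ => v t ξ - v t₀ ξ) 1 volume)
      (nhdsWithin t₀ (Set.Icc (0 : ℝ) T)) (nhds 0)

/-- Fourier-side solution of the generalized improved Boussinesq equation with
nonlinearity `u^k` and data `(v₀, v₁)` on `[0, T]`. -/
def IsGIBqSol (k : ℕ) (T : ℝ) (v₀ v₁ : ℝ → ℂ) (v : ℝ → ℝ → ℂ) : Prop :=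
  (∀ t ∈ Set.Icc (0 : ℝ) T, Integrable (v t)) ∧
  ContinuousL1On T v ∧
  ∀ t ∈ Set.Icc (0 : ℝ) T,
    ∀ᵐ ξ ∂volume, v t ξ = Shat t v₀ v₁ ξ + Ihat k (fun _ => v) t ξ

/-- Picard iterates `Ξ̂_j` for gIBq on the Fourier side. -/
def Xi (k : ℕ) (v₀ v₁ : ℝ → ℂ) : ℕ → ℝ → ℝ → ℂ
  | 0 => fun t => Shat t v₀ v₁
  | (j+1) => fun t ξ =>
      ∑ p ∈ (Finset.Nat.antidiagonalTuple k j).attach,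
        Ihat k (fun i => Xi k v₀ v₁ (p.1 i)) t ξ
decreasing_by
  have hsum := Finset.Nat.mem_antidiagonalTuple.mp p.2
  have hle : p.1 i ≤ j := by
    calc p.1 i ≤ ∑ i', p.1 i' :=
          Finset.single_le_sum (fun _ _ => Nat.zero_le _) (Finset.mem_univ i)
      _ = j := hsum
  omega

/-- The `FL^{s,p}` norm on the Fourier side: `‖⟨ξ⟩^s w‖_{L^p}`. -/
def FLnorm (s : ℝ) (p : ℝ≥0∞) (w : ℝ → ℂ) : ℝ≥0∞ :=
  eLpNorm (fun ξ => jbw s ξ * ‖w ξ‖) p volume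

end

/-!
The multipliers satisfy `|cos (tλ)| ≤ 1`, `|m(t, ξ)| ≤ |t|` and `|sin ((t - t')λ) λ| ≤ |t|` for `t'`
between `0` and `t`, so by Young's inequality `‖f ∗ g‖₁ ≤ ‖f‖₁ ‖g‖₁` each Duhamel integral gains a
factor `t²` and multiplies the `L¹` norms of its arguments. Hence
`‖Ξ̂_j(t)‖₁ ≤ a_j |t|^(2j) (‖v₀‖₁ + |t| ‖v₁‖₁)^((k-1)j+1)`, where `a_j` satisfies the same
recursion as the iterates, i.e. is the Fuss–Catalan number. The generating function of `a_j` solves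
`A = 1 + x A^k`, which keeps its partial sums below `2` at `x = 2⁻ᵏ`; thus `a_j ≤ 2 · 2^(kj)`.
-/

open Function

section Tuples

lemma apply_le_of_mem_antidiagonalTuple {k n : ℕ} {p : Fin k → ℕ}
    (hp : p ∈ Finset.Nat.antidiagonalTuple k n) (i : Fin k) : p i ≤ n :=
  (Finset.single_le_sum (fun _ _ => Nat.zero_le _) (Finset.mem_univ i)).trans_eq
    (Finset.Nat.mem_antidiagonalTuple.mp hp)

lemma sum_range_sum_antidiagonalTuple_le {R : Type*} [CommSemiring R] [PartialOrder R]
    [CanonicallyOrderedAdd R] (k N : ℕ) (f : ℕ → R) :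
    ∑ n ∈ Finset.range N, ∑ p ∈ Finset.Nat.antidiagonalTuple k n, ∏ i, f (p i) ≤
      (∑ n ∈ Finset.range N, f n) ^ k := by
  rw [Finset.sum_pow', ← Finset.sum_biUnion]
  · refine Finset.sum_le_sum_of_subset fun p hp => ?_
    obtain ⟨n, hn, hpn⟩ := Finset.mem_biUnion.mp hp
    exact Fintype.mem_piFinset.mpr fun i => Finset.mem_range.mpr <|
      (apply_le_of_mem_antidiagonalTuple hpn i).trans_lt (Finset.mem_range.mp hn)
  · intro m _ n _ hmn
    refine Finset.disjoint_left.mpr fun p hpm hpn => hmn ?_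
    rw [← Finset.Nat.mem_antidiagonalTuple.mp hpm, Finset.Nat.mem_antidiagonalTuple.mp hpn]

/-- The Fuss–Catalan numbers `a_j`, defined by `a_0 = 1` and
`a_(j+1) = ∑_{j₁ + ⋯ + j_k = j} a_{j₁} ⋯ a_{j_k}`. They count the `k`-ary trees with `j` nodes,
hence the multilinear terms in the `j`-th Picard iterate. The sum runs over an attached `Finset` so
that membership is available for the termination proof; see `fussCatalan_succ`. -/
def fussCatalan (k : ℕ) : ℕ → ℕ
  | 0 => 1
  | j + 1 => ∑ p ∈ (Finset.Nat.antidiagonalTuple k j).attach, ∏ i, fussCatalan k (p.1 i)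
decreasing_by exact Nat.lt_succ_of_le (apply_le_of_mem_antidiagonalTuple p.2 i)

lemma fussCatalan_zero (k : ℕ) : fussCatalan k 0 = 1 := by
  rw [fussCatalan]

lemma fussCatalan_succ (k j : ℕ) :
    fussCatalan k (j + 1) =
      ∑ p ∈ Finset.Nat.antidiagonalTuple k j, ∏ i, fussCatalan k (p i) := by
  rw [fussCatalan]
  exact Finset.sum_attach _ fun p : Fin k → ℕ => ∏ i, fussCatalan k (p i)

lemma fussCatalan_succ_mul_pow {R : Type*} [CommSemiring R] (k j : ℕ) (x : R) :
    fussCatalan k (j + 1) * x ^ (j + 1) =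
      x * ∑ p ∈ Finset.Nat.antidiagonalTuple k j, ∏ i, (fussCatalan k (p i) * x ^ p i) := by
  have prod_eq (p) (hp : p ∈ Finset.Nat.antidiagonalTuple k j) :
      ∏ i, (fussCatalan k (p i) * x ^ p i) = (∏ i, (fussCatalan k (p i) : R)) * x ^ j := by
    rw [Finset.prod_mul_distrib, Finset.prod_pow_eq_pow_sum,
      Finset.Nat.mem_antidiagonalTuple.mp hp]
  rw [Finset.sum_congr rfl prod_eq, ← Finset.sum_mul, fussCatalan_succ]
  push_cast
  ring

lemma sum_fussCatalan_mul_pow_le_two {k : ℕ} {x : ℝ≥0∞} (hx : x * 2 ^ k ≤ 1) (N : ℕ) :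
    ∑ j ∈ Finset.range N, fussCatalan k j * x ^ j ≤ 2 := by
  induction N with
  | zero => simp
  | succ N ih =>
    calc ∑ j ∈ Finset.range (N + 1), fussCatalan k j * x ^ j
        = x * ∑ j ∈ Finset.range N, ∑ p ∈ Finset.Nat.antidiagonalTuple k j,
            ∏ i, (fussCatalan k (p i) * x ^ p i) + 1 := by
          simp only [Finset.sum_range_succ', fussCatalan_succ_mul_pow, Finset.mul_sum,
            fussCatalan_zero, Nat.cast_one, pow_zero, mul_one]
      _ ≤ x * (∑ j ∈ Finset.range N, fussCatalan k j * x ^ j) ^ k + 1 := by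
          gcongr
          exact sum_range_sum_antidiagonalTuple_le k N fun j => (fussCatalan k j * x ^ j : ℝ≥0∞)
      _ ≤ x * 2 ^ k + 1 := by gcongr
      _ ≤ 1 + 1 := by gcongr
      _ = 2 := one_add_one_eq_two

lemma fussCatalan_le (k j : ℕ) : (fussCatalan k j : ℝ≥0∞) ≤ (2 ^ (k + 1)) ^ j := by
  obtain rfl | hj := eq_or_ne j 0
  · simp [fussCatalan_zero]
  have inv_mul : ((2 : ℝ≥0∞) ^ k)⁻¹ * 2 ^ k = 1 :=
    ENNReal.inv_mul_cancel (by positivity) (by finiteness)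
  have term_le : fussCatalan k j * ((2 : ℝ≥0∞) ^ k)⁻¹ ^ j ≤ 2 :=
    (Finset.single_le_sum (f := fun j => fussCatalan k j * ((2 : ℝ≥0∞) ^ k)⁻¹ ^ j)
      (fun _ _ => zero_le) (Finset.self_mem_range_succ j)).trans
      (sum_fussCatalan_mul_pow_le_two inv_mul.le (j + 1))
  calc (fussCatalan k j : ℝ≥0∞)
      = fussCatalan k j * ((2 : ℝ≥0∞) ^ k)⁻¹ ^ j * (2 ^ k) ^ j := by
        rw [mul_assoc, ← mul_pow, inv_mul, one_pow, mul_one]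
    _ ≤ 2 ^ j * (2 ^ k) ^ j := by
        gcongr
        exact term_le.trans (le_self_pow₀ one_le_two hj)
    _ = (2 ^ (k + 1)) ^ j := by rw [← mul_pow, pow_succ']

end Tuples

section Multipliers

variable (t ξ : ℝ)

lemma lam_nonneg : 0 ≤ lam ξ := by
  unfold lam
  positivity

lemma lam_le_one : lam ξ ≤ 1 := by
  rw [lam, ← Real.sqrt_eq_rpow]
  refine div_le_one_of_le₀ (Real.abs_le_sqrt ?_) (Real.sqrt_nonneg _)
  linarith

lemma measurable_lam : Measurable lam := by
  unfold lam
  fun_prop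

lemma abs_sin_mul_lam_le : |Real.sin (t * lam ξ)| ≤ |t| * lam ξ :=
  Real.abs_sin_le_abs.trans_eq <| by rw [abs_mul, abs_of_nonneg (lam_nonneg ξ)]

lemma abs_sin_mul_lam_mul_lam_le : |Real.sin (t * lam ξ) * lam ξ| ≤ |t| := by
  rw [abs_mul, abs_of_nonneg (lam_nonneg ξ)]
  calc |Real.sin (t * lam ξ)| * lam ξ ≤ |Real.sin (t * lam ξ)| :=
        mul_le_of_le_one_right (abs_nonneg _) (lam_le_one ξ)
    _ ≤ |t| * lam ξ := abs_sin_mul_lam_le t ξ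
    _ ≤ |t| := mul_le_of_le_one_right (abs_nonneg t) (lam_le_one ξ)

lemma measurable_mker : Measurable (uncurry mker) := by
  have := measurable_lam
  exact Measurable.ite (measurable_snd (measurableSet_singleton 0)) (by fun_prop) (by fun_prop)

lemma abs_mker_le : |mker t ξ| ≤ |t| := by
  unfold mker
  split_ifs
  · rfl
  · rw [abs_div, abs_of_nonneg (lam_nonneg ξ)]
    exact div_le_of_le_mul₀ (lam_nonneg ξ) (abs_nonneg t) (abs_sin_mul_lam_le t ξ)

end Multipliers

section Propagator

variable {v₀ v₁ : ℝ → ℂ}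

lemma measurable_Shat (h₀ : Measurable v₀) (h₁ : Measurable v₁) :
    Measurable (uncurry fun t => Shat t v₀ v₁) := by
  have := measurable_lam
  have : Measurable fun q : ℝ × ℝ => mker q.1 q.2 := measurable_mker
  unfold Shat uncurry
  fun_prop

lemma lintegral_enorm_Shat_le (h₀ : Measurable v₀) (t : ℝ) :
    ∫⁻ ξ, ‖Shat t v₀ v₁ ξ‖ₑ ≤ (∫⁻ ξ, ‖v₀ ξ‖ₑ) + ‖t‖ₑ * ∫⁻ ξ, ‖v₁ ξ‖ₑ := by
  have cos_le (ξ : ℝ) : ‖(Real.cos (t * lam ξ) : ℂ)‖ₑ ≤ 1 := by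
    rw [← ofReal_norm, Complex.norm_real, ENNReal.ofReal_le_one]
    exact Real.abs_cos_le_one _
  have mker_le (ξ : ℝ) : ‖(mker t ξ : ℂ)‖ₑ ≤ ‖t‖ₑ := by
    rw [enorm_le_iff_norm_le, Complex.norm_real]
    exact abs_mker_le t ξ
  calc ∫⁻ ξ, ‖Shat t v₀ v₁ ξ‖ₑ ≤ ∫⁻ ξ, ‖v₀ ξ‖ₑ + ‖t‖ₑ * ‖v₁ ξ‖ₑ := by
        refine lintegral_mono fun ξ => (enorm_add_le _ _).trans ?_
        rw [enorm_mul, enorm_mul]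
        gcongr
        · exact mul_le_of_le_one_left' (cos_le ξ)
        · exact mker_le ξ
    _ = (∫⁻ ξ, ‖v₀ ξ‖ₑ) + ‖t‖ₑ * ∫⁻ ξ, ‖v₁ ξ‖ₑ := by
        rw [lintegral_add_left h₀.enorm, lintegral_const_mul' _ _ enorm_ne_top]

end Propagator

section Convolution

variable {ι α : Type*}

lemma conv_congr_ae {f f' g g' : ℝ → ℂ} (hf : f =ᵐ[volume] f') (hg : g =ᵐ[volume] g') :
    conv f g = conv f' g' := by
  ext ξ
  have hg_sub : (fun η => g (ξ - η)) =ᵐ[volume] fun η => g' (ξ - η) :=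
    (Measure.measurePreserving_sub_left volume ξ).quasiMeasurePreserving.ae_eq_comp hg
  exact integral_congr_ae (hf.mul hg_sub)

lemma measurable_conv [MeasurableSpace α] {f g : α → ℝ → ℂ}
    (hf : Measurable (uncurry f)) (hg : Measurable (uncurry g)) :
    Measurable (uncurry fun a => conv (f a) (g a)) := by
  have hfg : Measurable fun r : (α × ℝ) × ℝ => f r.1.1 r.2 * g r.1.1 (r.1.2 - r.2) :=
    (hf.comp (measurable_fst.fst.prodMk measurable_snd)).mul
      (hg.comp (measurable_fst.fst.prodMk (measurable_fst.snd.sub measurable_snd)))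
  exact hfg.stronglyMeasurable.integral_prod_right'.measurable

lemma lintegral_enorm_conv_le {f g : ℝ → ℂ} (hf : Measurable f) (hg : Measurable g) :
    ∫⁻ ξ, ‖conv f g ξ‖ₑ ≤ (∫⁻ ξ, ‖f ξ‖ₑ) * ∫⁻ ξ, ‖g ξ‖ₑ := by
  calc ∫⁻ ξ, ‖conv f g ξ‖ₑ ≤ ∫⁻ ξ, ∫⁻ η, ‖f η‖ₑ * ‖g (ξ - η)‖ₑ := by
        simp only [← enorm_mul]
        exact lintegral_mono fun ξ => enorm_integral_le_lintegral_enorm _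
    _ = ∫⁻ η, ∫⁻ ξ, ‖f η‖ₑ * ‖g (ξ - η)‖ₑ :=
        lintegral_lintegral_swap (by unfold uncurry; fun_prop)
    _ = ∫⁻ η, ‖f η‖ₑ * ∫⁻ ξ, ‖g ξ‖ₑ := by
        refine lintegral_congr fun η => ?_
        rw [lintegral_const_mul _ (by fun_prop), lintegral_sub_right_eq_self (‖g ·‖ₑ) η]
    _ = (∫⁻ ξ, ‖f ξ‖ₑ) * ∫⁻ ξ, ‖g ξ‖ₑ := lintegral_mul_const _ hf.enorm

lemma convList_congr_ae : ∀ {l : List ι} {f g : ι → α → ℝ → ℂ},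
    (∀ i ∈ l, ∀ᵐ ξ, ∀ a, f i a ξ = g i a ξ) →
      ∀ᵐ ξ, ∀ a, convList (l.map (f · a)) ξ = convList (l.map (g · a)) ξ
  | [], _, _, _ => .of_forall fun _ _ => rfl
  | [i], _, _, h => h i List.mem_cons_self
  | i :: j :: l, f, g, h => by
    have head := h i List.mem_cons_self
    have tail := convList_congr_ae fun i' hi' => h i' (List.mem_cons_of_mem i hi')
    exact .of_forall fun ξ a =>
      congrFun (conv_congr_ae (head.mono fun _ h => h a) (tail.mono fun _ h => h a)) ξ

lemma measurable_convList [MeasurableSpace α] {f : ι → α → ℝ → ℂ} : ∀ {l : List ι},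
    (∀ i ∈ l, Measurable (uncurry (f i))) →
      Measurable (uncurry fun a => convList (l.map (f · a)))
  | [], _ => measurable_const
  | [i], h => h i List.mem_cons_self
  | i :: _ :: _, h => measurable_conv (h i List.mem_cons_self)
      (measurable_convList fun i' hi' => h i' (List.mem_cons_of_mem i hi'))

lemma lintegral_enorm_convList_le {f : ι → ℝ → ℂ} : ∀ {l : List ι},
    (∀ i ∈ l, Measurable (f i)) →
      ∫⁻ ξ, ‖convList (l.map f) ξ‖ₑ ≤ (l.map fun i => ∫⁻ ξ, ‖f i ξ‖ₑ).prod
  | [], _ => by simp [convList]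
  | [i], _ => by simp [convList]
  | i :: j :: l, h => by
    have h_tail (i') (hi' : i' ∈ j :: l) : Measurable (f i') :=
      h i' (List.mem_cons_of_mem i hi')
    have tail_measurable : Measurable (convList ((j :: l).map f)) :=
      (measurable_convList (f := fun i (_ : Unit) => f i) fun i' hi' =>
        (h_tail i' hi').comp measurable_snd).of_uncurry_left (x := ())
    calc ∫⁻ ξ, ‖convList ((i :: j :: l).map f) ξ‖ₑ
        ≤ (∫⁻ ξ, ‖f i ξ‖ₑ) * ∫⁻ ξ, ‖convList ((j :: l).map f) ξ‖ₑ :=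
          lintegral_enorm_conv_le (h i List.mem_cons_self) tail_measurable
      _ ≤ (∫⁻ ξ, ‖f i ξ‖ₑ) * ((j :: l).map fun i => ∫⁻ ξ, ‖f i ξ‖ₑ).prod := by
          gcongr
          exact lintegral_enorm_convList_le h_tail
      _ = ((i :: j :: l).map fun i => ∫⁻ ξ, ‖f i ξ‖ₑ).prod := by
          simp only [List.map_cons, List.prod_cons]

end Convolution

section IntervalIntegral

variable {E : Type*} [NormedAddCommGroup E] [NormedSpace ℝ E]

lemma enorm_intervalIntegral_le_lintegral_enorm (f : ℝ → E) (a b : ℝ) (μ : Measure ℝ) :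
    ‖∫ x in a..b, f x ∂μ‖ₑ ≤ ∫⁻ x in Set.uIoc a b, ‖f x‖ₑ ∂μ := by
  rw [← ofReal_norm, intervalIntegral.norm_integral_eq_norm_integral_uIoc, ofReal_norm]
  exact enorm_integral_le_lintegral_enorm _

lemma stronglyMeasurable_intervalIntegral_zero {α : Type*} [MeasurableSpace α] {b : α → ℝ}
    {F : α → ℝ → E} (hb : Measurable b) (hF : StronglyMeasurable (uncurry F)) :
    StronglyMeasurable fun a => ∫ s in (0 : ℝ)..b a, F a s := by
  -- Rescaling to `[0, 1]` removes the dependence of the domain of integration on the parameter.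
  have rescale (a : α) : ∫ s in (0 : ℝ)..b a, F a s = b a • ∫ s in Set.Ioc 0 1, F a (b a * s) := by
    rw [← intervalIntegral.integral_of_le zero_le_one, intervalIntegral.smul_integral_comp_mul_left,
      mul_zero, mul_one]
  simp only [rescale]
  have hF_scaled : StronglyMeasurable fun q : α × ℝ => F q.1 (b q.1 * q.2) :=
    hF.comp_measurable (measurable_fst.prodMk ((hb.comp measurable_fst).mul measurable_snd))
  exact hb.stronglyMeasurable.smul hF_scaled.integral_prod_right'

end IntervalIntegral

section Duhamel

variable {k : ℕ} {w w' : Fin k → ℝ → ℝ → ℂ}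

lemma Ihat_congr_ae (h : ∀ i, ∀ᵐ ξ, ∀ t, w i t ξ = w' i t ξ) :
    ∀ᵐ ξ, ∀ t, Ihat k w t ξ = Ihat k w' t ξ := by
  filter_upwards [convList_congr_ae (l := List.finRange k) fun i _ => h i] with ξ hξ t
  simp only [Ihat, List.ofFn_eq_map, hξ]

lemma measurable_convList_ofFn (h : ∀ i, Measurable (uncurry (w i))) :
    Measurable (uncurry fun t => convList (List.ofFn (w · t))) := by
  simpa only [List.ofFn_eq_map] using measurable_convList fun i _ => h i

lemma lintegral_enorm_convList_ofFn_le {f : Fin k → ℝ → ℂ} (h : ∀ i, Measurable (f i)) :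
    ∫⁻ ξ, ‖convList (List.ofFn f) ξ‖ₑ ≤ ∏ i, ∫⁻ ξ, ‖f i ξ‖ₑ := by
  rw [← List.prod_ofFn, List.ofFn_eq_map, List.ofFn_eq_map]
  exact lintegral_enorm_convList_le fun i _ => h i

lemma measurable_Ihat (h : ∀ i, Measurable (uncurry (w i))) :
    Measurable (uncurry (Ihat k w)) := by
  have h_lam := measurable_lam
  have h_conv : Measurable fun r : (ℝ × ℝ) × ℝ => convList (List.ofFn (w · r.2)) r.1.2 :=
    (measurable_convList_ofFn h).comp (measurable_snd.prodMk measurable_fst.snd)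
  refine (stronglyMeasurable_intervalIntegral_zero measurable_fst ?_).measurable
  exact Measurable.stronglyMeasurable (by unfold uncurry; fun_prop)

lemma enorm_Ihat_le (w : Fin k → ℝ → ℝ → ℂ) (t ξ : ℝ) :
    ‖Ihat k w t ξ‖ₑ ≤
      ∫⁻ s in Set.uIoc 0 t, ‖t‖ₑ * ‖convList (List.ofFn (w · s)) ξ‖ₑ := by
  refine (enorm_intervalIntegral_le_lintegral_enorm _ _ _ _).trans ?_
  refine setLIntegral_mono' measurableSet_uIoc fun s hs => ?_
  rw [enorm_mul]
  gcongr
  rw [enorm_le_iff_norm_le, Complex.norm_real]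
  calc |Real.sin ((t - s) * lam ξ) * lam ξ| ≤ |t - s| := abs_sin_mul_lam_mul_lam_le _ ξ
    _ ≤ |t - 0| := Set.abs_sub_right_of_mem_uIcc (Set.uIoc_subset_uIcc hs)
    _ = |t| := by rw [sub_zero]

lemma lintegral_enorm_Ihat_le (h : ∀ i, Measurable (uncurry (w i))) (t : ℝ) :
    ∫⁻ ξ, ‖Ihat k w t ξ‖ₑ ≤ ‖t‖ₑ * ∫⁻ s in Set.uIoc 0 t, ∏ i, ∫⁻ ξ, ‖w i s ξ‖ₑ := by
  calc ∫⁻ ξ, ‖Ihat k w t ξ‖ₑ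
      ≤ ∫⁻ ξ, ∫⁻ s in Set.uIoc 0 t, ‖t‖ₑ * ‖convList (List.ofFn (w · s)) ξ‖ₑ :=
        lintegral_mono fun ξ => enorm_Ihat_le w t ξ
    _ = ∫⁻ s in Set.uIoc 0 t, ∫⁻ ξ, ‖t‖ₑ * ‖convList (List.ofFn (w · s)) ξ‖ₑ :=
        lintegral_lintegral_swap
          (((measurable_convList_ofFn h).comp measurable_swap).enorm.const_mul _).aemeasurable
    _ = ‖t‖ₑ * ∫⁻ s in Set.uIoc 0 t, ∫⁻ ξ, ‖convList (List.ofFn (w · s)) ξ‖ₑ := by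
        simp only [lintegral_const_mul' _ _ enorm_ne_top]
    _ ≤ ‖t‖ₑ * ∫⁻ s in Set.uIoc 0 t, ∏ i, ∫⁻ ξ, ‖w i s ξ‖ₑ := by
        gcongr with s
        exact lintegral_enorm_convList_ofFn_le fun i => (h i).of_uncurry_left

lemma lintegral_enorm_Ihat_le_of_forall_le (h : ∀ i, Measurable (uncurry (w i))) {t : ℝ}
    {B : Fin k → ℝ≥0∞} (hB : ∀ i s, ‖s‖ₑ ≤ ‖t‖ₑ → ∫⁻ ξ, ‖w i s ξ‖ₑ ≤ B i) :
    ∫⁻ ξ, ‖Ihat k w t ξ‖ₑ ≤ ‖t‖ₑ ^ 2 * ∏ i, B i := by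
  have enorm_le {s : ℝ} (hs : s ∈ Set.uIoc 0 t) : ‖s‖ₑ ≤ ‖t‖ₑ := by
    rw [enorm_le_iff_norm_le]
    simpa using Set.abs_sub_left_of_mem_uIcc (Set.uIoc_subset_uIcc hs)
  calc ∫⁻ ξ, ‖Ihat k w t ξ‖ₑ
      ≤ ‖t‖ₑ * ∫⁻ s in Set.uIoc 0 t, ∏ i, ∫⁻ ξ, ‖w i s ξ‖ₑ := lintegral_enorm_Ihat_le h t
    _ ≤ ‖t‖ₑ * ∫⁻ _ in Set.uIoc 0 t, ∏ i, B i := by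
        gcongr ‖t‖ₑ * ?_
        exact setLIntegral_mono' measurableSet_uIoc fun s hs =>
          Finset.prod_le_prod' fun i _ => hB i s (enorm_le hs)
    _ = ‖t‖ₑ ^ 2 * ∏ i, B i := by
        rw [setLIntegral_const, Real.volume_uIoc, sub_zero, ← Real.enorm_eq_ofReal_abs]
        ring

end Duhamel

section PicardIterates

variable {k : ℕ} {v₀ v₁ u₀ u₁ : ℝ → ℂ}

lemma Xi_zero (k : ℕ) (v₀ v₁ : ℝ → ℂ) : Xi k v₀ v₁ 0 = fun t => Shat t v₀ v₁ := by
  rw [Xi]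

lemma Xi_succ (k : ℕ) (v₀ v₁ : ℝ → ℂ) (j : ℕ) :
    Xi k v₀ v₁ (j + 1) = fun t ξ =>
      ∑ p ∈ Finset.Nat.antidiagonalTuple k j, Ihat k (fun i => Xi k v₀ v₁ (p i)) t ξ := by
  ext t ξ
  rw [Xi]
  exact Finset.sum_attach _ fun p : Fin k → ℕ => Ihat k (fun i => Xi k v₀ v₁ (p i)) t ξ

lemma Xi_congr_ae (h₀ : v₀ =ᵐ[volume] u₀) (h₁ : v₁ =ᵐ[volume] u₁) (j : ℕ) :
    ∀ᵐ ξ, ∀ t, Xi k v₀ v₁ j t ξ = Xi k u₀ u₁ j t ξ := by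
  induction j using Nat.strong_induction_on with
  | _ j ih =>
    cases j with
    | zero =>
      filter_upwards [h₀, h₁] with ξ hξ₀ hξ₁ t
      simp only [Xi_zero, Shat, hξ₀, hξ₁]
    | succ j =>
      have summands : ∀ p ∈ Finset.Nat.antidiagonalTuple k j, ∀ᵐ ξ, ∀ t,
          Ihat k (fun i => Xi k v₀ v₁ (p i)) t ξ = Ihat k (fun i => Xi k u₀ u₁ (p i)) t ξ :=
        fun p hp => Ihat_congr_ae fun i =>
          ih (p i) (Nat.lt_succ_of_le (apply_le_of_mem_antidiagonalTuple hp i))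
      filter_upwards [(Filter.eventually_all_finset _).mpr summands] with ξ hξ t
      simp only [Xi_succ]
      exact Finset.sum_congr rfl fun p hp => hξ p hp t

lemma measurable_Xi (h₀ : Measurable v₀) (h₁ : Measurable v₁) (j : ℕ) :
    Measurable (uncurry (Xi k v₀ v₁ j)) := by
  induction j using Nat.strong_induction_on with
  | _ j ih =>
    cases j with
    | zero => simpa only [Xi_zero] using measurable_Shat h₀ h₁
    | succ j =>
      rw [Xi_succ]
      exact Finset.measurable_sum _ fun p hp => measurable_Ihat fun i =>
        ih (p i) (Nat.lt_succ_of_le (apply_le_of_mem_antidiagonalTuple hp i))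

lemma lintegral_enorm_Xi_succ_le (h₀ : Measurable v₀) (h₁ : Measurable v₁) (j : ℕ) (t : ℝ) :
    ∫⁻ ξ, ‖Xi k v₀ v₁ (j + 1) t ξ‖ₑ ≤
      ∑ p ∈ Finset.Nat.antidiagonalTuple k j,
        ∫⁻ ξ, ‖Ihat k (fun i => Xi k v₀ v₁ (p i)) t ξ‖ₑ := by
  rw [Xi_succ, ← lintegral_finsetSum]
  · exact lintegral_mono fun ξ => enorm_sum_le _ _
  · exact fun p _ => (measurable_Ihat fun i => measurable_Xi h₀ h₁ (p i)).of_uncurry_left.enorm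

lemma sq_mul_prod_mul_pow_mul_pow {R : Type*} [CommSemiring R] {n j : ℕ} {p : Fin (n + 1) → ℕ}
    (hp : p ∈ Finset.Nat.antidiagonalTuple (n + 1) j) (a : ℕ → R) (x M : R) :
    x ^ 2 * ∏ i, (a (p i) * x ^ (2 * p i) * M ^ (n * p i + 1)) =
      (∏ i, a (p i)) * x ^ (2 * (j + 1)) * M ^ (n * (j + 1) + 1) := by
  rw [Finset.prod_mul_distrib, Finset.prod_mul_distrib, Finset.prod_pow_eq_pow_sum,
    Finset.prod_pow_eq_pow_sum, Finset.sum_add_distrib, ← Finset.mul_sum, ← Finset.mul_sum,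
    Finset.Nat.mem_antidiagonalTuple.mp hp, Fin.sum_const, smul_eq_mul, mul_one]
  ring

lemma lintegral_enorm_Xi_le {n : ℕ} (h₀ : Measurable v₀) (h₁ : Measurable v₁) (j : ℕ) (t : ℝ) :
    ∫⁻ ξ, ‖Xi (n + 1) v₀ v₁ j t ξ‖ₑ ≤
      fussCatalan (n + 1) j * ‖t‖ₑ ^ (2 * j) *
        ((∫⁻ ξ, ‖v₀ ξ‖ₑ) + ‖t‖ₑ * ∫⁻ ξ, ‖v₁ ξ‖ₑ) ^ (n * j + 1) := by
  induction j using Nat.strong_induction_on generalizing t with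
  | _ j ih =>
    cases j with
    | zero => simpa [Xi_zero, fussCatalan_zero] using lintegral_enorm_Shat_le h₀ t
    | succ j =>
      set M := (∫⁻ ξ, ‖v₀ ξ‖ₑ) + ‖t‖ₑ * ∫⁻ ξ, ‖v₁ ξ‖ₑ with hM
      have summand_le (p) (hp : p ∈ Finset.Nat.antidiagonalTuple (n + 1) j) :
          ∫⁻ ξ, ‖Ihat (n + 1) (fun i => Xi (n + 1) v₀ v₁ (p i)) t ξ‖ₑ ≤
            (∏ i, (fussCatalan (n + 1) (p i) : ℝ≥0∞)) * ‖t‖ₑ ^ (2 * (j + 1)) *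
              M ^ (n * (j + 1) + 1) := by
        rw [← sq_mul_prod_mul_pow_mul_pow hp fun m => (fussCatalan (n + 1) m : ℝ≥0∞)]
        refine lintegral_enorm_Ihat_le_of_forall_le (fun i => measurable_Xi h₀ h₁ (p i)) ?_
        intro i s hs
        refine (ih (p i) (Nat.lt_succ_of_le (apply_le_of_mem_antidiagonalTuple hp i)) s).trans ?_
        rw [hM]
        gcongr
      calc ∫⁻ ξ, ‖Xi (n + 1) v₀ v₁ (j + 1) t ξ‖ₑ
          ≤ ∑ p ∈ Finset.Nat.antidiagonalTuple (n + 1) j,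
              ∫⁻ ξ, ‖Ihat (n + 1) (fun i => Xi (n + 1) v₀ v₁ (p i)) t ξ‖ₑ :=
            lintegral_enorm_Xi_succ_le h₀ h₁ j t
        _ ≤ ∑ p ∈ Finset.Nat.antidiagonalTuple (n + 1) j,
              (∏ i, (fussCatalan (n + 1) (p i) : ℝ≥0∞)) * ‖t‖ₑ ^ (2 * (j + 1)) *
                M ^ (n * (j + 1) + 1) := Finset.sum_le_sum summand_le
        _ = fussCatalan (n + 1) (j + 1) * ‖t‖ₑ ^ (2 * (j + 1)) * M ^ (n * (j + 1) + 1) := by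
            rw [← Finset.sum_mul, ← Finset.sum_mul, fussCatalan_succ]
            push_cast
            rfl

end PicardIterates

theorem picard_iterate_FL1_bound_general (k : ℕ) (hk : 1 ≤ k) {v₀ v₁ : ℝ → ℂ}
    (h₀ : AEStronglyMeasurable v₀) (h₁ : AEStronglyMeasurable v₁) (j : ℕ) (T : ℝ) :
    eLpNorm (Xi k v₀ v₁ j T) 1 volume ≤
      (2 ^ (k + 1)) ^ j * ‖T‖ₑ ^ (2 * j) *
        (eLpNorm v₀ 1 volume + ‖T‖ₑ * eLpNorm v₁ 1 volume) ^ ((k - 1) * j + 1) := by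
  obtain ⟨n, rfl⟩ := Nat.exists_eq_add_of_le' hk
  obtain ⟨u₀, hu₀, hvu₀⟩ := h₀.aemeasurable
  obtain ⟨u₁, hu₁, hvu₁⟩ := h₁.aemeasurable
  have Xi_ae_eq : Xi (n + 1) v₀ v₁ j T =ᵐ[volume] Xi (n + 1) u₀ u₁ j T :=
    (Xi_congr_ae hvu₀ hvu₁ j).mono fun _ h => h T
  rw [eLpNorm_congr_ae Xi_ae_eq, eLpNorm_congr_ae hvu₀, eLpNorm_congr_ae hvu₁]
  simp only [eLpNorm_one_eq_lintegral_enorm, Nat.add_sub_cancel]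
  refine (lintegral_enorm_Xi_le hu₀ hu₁ j T).trans ?_
  gcongr
  exact fussCatalan_le _ j

/-- `FL¹` bound on the Picard iterates:
`‖Ξ̂_j(v₀,v₁)(T)‖_{L¹} ≤ C^j T^{2j} (‖v₀‖_{L¹}+‖v₁‖_{L¹})^{(k-1)j+1}`. -/
theorem picard_iterate_FL1_bound (k : ℕ) (hk : 2 ≤ k) :
    ∃ C : ℝ, 0 < C ∧
      ∀ v₀ v₁ : ℝ → ℂ, Integrable v₀ → Integrable v₁ →
        ∀ j : ℕ, ∀ T : ℝ, 0 < T → T ≤ 1 →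
          eLpNorm (Xi k v₀ v₁ j T) 1 volume ≤
            ENNReal.ofReal C ^ j * ENNReal.ofReal T ^ (2 * j) *
              (eLpNorm v₀ 1 volume + eLpNorm v₁ 1 volume) ^ ((k - 1) * j + 1) := by
  refine ⟨2 ^ (k + 1), by positivity, fun v₀ v₁ h₀ h₁ j T hT hT1 => ?_⟩
  have T_le_one : ENNReal.ofReal T ≤ 1 := ENNReal.ofReal_le_one.mpr hT1
  calc eLpNorm (Xi k v₀ v₁ j T) 1 volume
      ≤ (2 ^ (k + 1)) ^ j * ENNReal.ofReal T ^ (2 * j) *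
          (eLpNorm v₀ 1 volume + ENNReal.ofReal T * eLpNorm v₁ 1 volume) ^ ((k - 1) * j + 1) := by
        rw [← Real.enorm_of_nonneg hT.le]
        exact picard_iterate_FL1_bound_general k (one_le_two.trans hk) h₀.1 h₁.1 j T
    _ ≤ ENNReal.ofReal (2 ^ (k + 1)) ^ j * ENNReal.ofReal T ^ (2 * j) *
          (eLpNorm v₀ 1 volume + eLpNorm v₁ 1 volume) ^ ((k - 1) * j + 1) := by
        rw [ENNReal.ofReal_pow zero_le_two, ENNReal.ofReal_ofNat]
        gcongr
        exact mul_le_of_le_one_left' T_le_one
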